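/- arXiv:2207.09826 — 11 statements merged into one kernel-verified Lean document; each statement's English description precedes it below -/
import Mathlib

section
/- Let m, n : ℕ and let G be a simple graph on the grid vertex set V = Fin m × Fin n, with signed Laplacian L(G) = D(G) − A(G). Then the partial transpose (L(G))^Γ is positive semidefinite if and only if D(G) = D(G^Γ). (Equivalently: the grid state obtained by trace-normalizing L(G) is positive under partial transpose if and only if the degree matrices of G and of its partial transpose graph coincide.) -/
open Matrix

-- Adjacency matrix of a simple graph, with real entries.
open scoped Classical in
noncomputable def adjM {V : Type*} [Fintype V] (G : SimpleGraph V) : Matrix V V ℝ :=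
  Matrix.of fun u v => if G.Adj u v then 1 else 0

-- Degree matrix of a simple graph: diagonal, with the vertex degrees on the diagonal.
open scoped Classical in
noncomputable def degM {V : Type*} [Fintype V] [DecidableEq V] (G : SimpleGraph V) :
    Matrix V V ℝ :=
  Matrix.diagonal fun v => ∑ u, if G.Adj v u then (1 : ℝ) else 0

/-- Signed Laplacian `L = D - A`. -/
noncomputable def lapL {V : Type*} [Fintype V] [DecidableEq V] (G : SimpleGraph V) :
    Matrix V V ℝ :=
  degM G - adjM G

/-- Partial transpose of a matrix indexed by the grid `Fin m × Fin n`. -/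
def pt {m n : ℕ} (M : Matrix (Fin m × Fin n) (Fin m × Fin n) ℝ) :
    Matrix (Fin m × Fin n) (Fin m × Fin n) ℝ :=
  Matrix.of fun p q => M (p.1, q.2) (q.1, p.2)

/-- Partial transpose graph: `(i,j) ~ (k,l)` iff `(i,l) ~ (k,j)` in `G`. -/
def ptGraph {m n : ℕ} (G : SimpleGraph (Fin m × Fin n)) : SimpleGraph (Fin m × Fin n) where
  Adj p q := G.Adj (p.1, q.2) (q.1, p.2)
  symm := ⟨fun _ _ h => G.symm.symm _ _ h⟩
  loopless := ⟨fun p h => G.loopless.irrefl _ h⟩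

lemma pt_lapL {m n : ℕ} (G : SimpleGraph (Fin m × Fin n)) :
    pt (lapL G) = degM G - adjM (ptGraph G) := by
  ext ⟨i, j⟩ ⟨k, l⟩
  simp only [pt, lapL, degM, adjM, ptGraph, Matrix.of_apply, Matrix.sub_apply,
    Matrix.diagonal_apply, Prod.mk.injEq]
  congr 1
  by_cases h : i = k ∧ j = l
  · obtain ⟨rfl, rfl⟩ := h
    simp
  · rw [if_neg h, if_neg (fun h' => h ⟨h'.1, h'.2.symm⟩)]

lemma lapL_posSemidef {V : Type*} [Fintype V] [DecidableEq V] (G : SimpleGraph V) :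
    (lapL G).PosSemidef := by
  classical
  have h := SimpleGraph.posSemidef_lapMatrix ℝ G
  have e : lapL G = G.lapMatrix ℝ := by
    ext u v
    simp [lapL, degM, adjM, SimpleGraph.lapMatrix, SimpleGraph.degMatrix,
      SimpleGraph.adjMatrix, Matrix.diagonal_apply, SimpleGraph.degree,
      SimpleGraph.neighborFinset_eq_filter]
  rw [e]; exact h

open scoped Classical in
lemma sum_deg {m n : ℕ} (G : SimpleGraph (Fin m × Fin n)) :
    (∑ p, ∑ q, if (ptGraph G).Adj p q then (1 : ℝ) else 0) =
      ∑ p, ∑ q, if G.Adj p q then (1 : ℝ) else 0 := by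
  simp only [← Fintype.sum_prod_type']
  refine Fintype.sum_equiv
    ⟨fun x => ((x.1.1, x.2.2), (x.2.1, x.1.2)), fun x => ((x.1.1, x.2.2), (x.2.1, x.1.2)),
      fun _ => rfl, fun _ => rfl⟩ _ _ ?_
  intro x
  rfl

/-- Degree criterion for `L`-graphs: the partial transpose of the signed Laplacian of a
grid-labelled graph is positive semidefinite iff the degree matrices of the graph and of its
partial transpose graph coincide. -/
theorem degree_criterion_L (m n : ℕ) (G : SimpleGraph (Fin m × Fin n)) :
    (pt (lapL G)).PosSemidef ↔ degM G = degM (ptGraph G) := by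
  constructor
  · intro h
    classical
    have hv : ∀ p, (pt (lapL G) *ᵥ (fun _ => (1 : ℝ))) p =
        (∑ u, if G.Adj p u then (1 : ℝ) else 0) -
          ∑ u, if (ptGraph G).Adj p u then (1 : ℝ) else 0 := by
      intro p
      rw [pt_lapL, Matrix.sub_mulVec, Pi.sub_apply, degM, Matrix.mulVec_diagonal]
      simp [adjM, Matrix.mulVec, dotProduct]
    have h0 : pt (lapL G) *ᵥ (fun _ => (1 : ℝ)) = 0 := by
      rw [← h.dotProduct_mulVec_zero_iff]
      simp only [dotProduct, hv, Pi.star_apply, star_one, one_mul]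
      rw [Finset.sum_sub_distrib, sum_deg, sub_self]
    unfold degM
    congr 1
    funext p
    have := hv p
    rw [h0, Pi.zero_apply] at this
    convert (sub_eq_zero.mp this.symm)
  · intro h
    rw [pt_lapL, h]
    exact lapL_posSemidef _
end

section
/- Let m, n : ℕ, V = Fin m × Fin n, and let ρ be a separable V×V complex matrix (in particular ρ is Hermitian and positive semidefinite). Then the range of ρ is spanned by product vectors lying in it: every vector in the range of ρ is a finite linear combination of vectors z in the range of ρ of product form z(i,j) = x(i)·y(j) for some x : Fin m → ℂ and y : Fin n → ℂ. In particular, if a Hermitian positive semidefinite V×V matrix of rank r has fewer than r linearly independent product vectors in its range, then it is not separable (it is entangled). -/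
open Matrix
open scoped ComplexOrder

/-- A `V × V` complex matrix (`V = Fin m × Fin n`) is separable if it is a finite sum of
(unnormalized) projectors onto product vectors. -/
def MatrixIsSeparable {m n : ℕ} (ρ : Matrix (Fin m × Fin n) (Fin m × Fin n) ℂ) : Prop :=
  ∃ (T : Finset ℕ) (x : ℕ → Fin m → ℂ) (y : ℕ → Fin n → ℂ),
    ∀ (i k : Fin m) (j l : Fin n),
      ρ (i, j) (k, l) = ∑ t ∈ T, x t i * star (x t k) * (y t j * star (y t l))

/-- A product vector on the grid: `z (i,j) = x i * y j`. -/
def IsProductVec {m n : ℕ} (z : Fin m × Fin n → ℂ) : Prop :=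
  ∃ (x : Fin m → ℂ) (y : Fin n → ℂ), ∀ (i : Fin m) (j : Fin n), z (i, j) = x i * y j

theorem sep_factor {m n : ℕ} (ρ : Matrix (Fin m × Fin n) (Fin m × Fin n) ℂ)
    (h : MatrixIsSeparable ρ) (z : Fin m × Fin n → ℂ) (hz : ∃ u, ρ.mulVec u = z) :
    z ∈ Submodule.span ℂ
      {w : Fin m × Fin n → ℂ | (∃ u, ρ.mulVec u = w) ∧ IsProductVec w} := by
  obtain ⟨T, x, y, hρ⟩ := h
  let A : Matrix (Fin m × Fin n) T ℂ := fun v t => x t v.1 * y t v.2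
  have hA : ρ = A * Aᴴ := by
    ext ⟨i, j⟩ ⟨k, l⟩
    rw [hρ, Matrix.mul_apply, ← Finset.sum_coe_sort]
    refine Finset.sum_congr rfl fun t _ => ?_
    change _ = x t i * y t j * star (x t k * y t l)
    rw [star_mul]
    ring
  have hle : LinearMap.range ρ.mulVecLin ≤ LinearMap.range A.mulVecLin := by
    rw [hA, Matrix.mulVecLin_mul]
    exact LinearMap.range_comp_le_range _ _
  have heq : LinearMap.range ρ.mulVecLin = LinearMap.range A.mulVecLin := by
    refine Submodule.eq_of_le_of_finrank_eq hle ?_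
    change ρ.rank = A.rank
    rw [hA, Matrix.rank_self_mul_conjTranspose]
  obtain ⟨u, rfl⟩ := hz
  have hu : ρ.mulVec u ∈ LinearMap.range A.mulVecLin := hle ⟨u, rfl⟩
  rw [Matrix.range_mulVecLin] at hu
  refine Submodule.span_mono ?_ hu
  rintro _ ⟨t, rfl⟩
  refine ⟨?_, x t, y t, fun i j => rfl⟩
  have : A.col t ∈ LinearMap.range ρ.mulVecLin := by
    rw [heq, Matrix.range_mulVecLin]
    exact Submodule.subset_span ⟨t, rfl⟩
  exact this

/-- The range of a separable matrix is spanned by the product vectors lying in it; in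
particular, a Hermitian positive semidefinite matrix of rank `r` with fewer than `r`
linearly independent product vectors in its range is entangled (not separable). -/
theorem range_spanned_by_product_vectors (m n : ℕ)
    (ρ : Matrix (Fin m × Fin n) (Fin m × Fin n) ℂ) :
    (MatrixIsSeparable ρ →
      ∀ z : Fin m × Fin n → ℂ, (∃ u, ρ.mulVec u = z) →
        z ∈ Submodule.span ℂ
          {w : Fin m × Fin n → ℂ | (∃ u, ρ.mulVec u = w) ∧ IsProductVec w}) ∧
    (ρ.IsHermitian → ρ.PosSemidef →
      (∀ s : Finset (Fin m × Fin n → ℂ),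
          (∀ z ∈ s, (∃ u, ρ.mulVec u = z) ∧ IsProductVec z) →
          LinearIndependent ℂ (fun z : s => (z : Fin m × Fin n → ℂ)) →
          s.card < ρ.rank) →
      ¬ MatrixIsSeparable ρ) := by
  refine ⟨sep_factor ρ, fun _ _ hs hsep => ?_⟩
  obtain ⟨b, hbS, hspan, hli⟩ := exists_linearIndependent ℂ
    {w : Fin m × Fin n → ℂ | (∃ u, ρ.mulVec u = w) ∧ IsProductVec w}
  have hfin : b.Finite := hli.setFinite
  lift b to Finset (Fin m × Fin n → ℂ) using hfin
  have hlt := hs b (fun z hz => hbS hz) hli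
  have hle : LinearMap.range ρ.mulVecLin ≤ Submodule.span ℂ (b : Set (Fin m × Fin n → ℂ)) := by
    rw [hspan]
    rintro z ⟨u, rfl⟩
    exact sep_factor ρ hsep _ ⟨u, rfl⟩
  have h1 : ρ.rank ≤ _ := Submodule.finrank_mono hle
  have h2 := finrank_span_finset_le_card (R := ℂ) b
  have h3 : Module.finrank ℂ (Submodule.span ℂ (b : Set (Fin m × Fin n → ℂ))) ≤ b.card := h2
  omega
end

section
/- Let n : ℕ and let M and Δ be n×n real matrices such that: M is symmetric and positive semidefinite; Δ is diagonal, has trace zero, and is nonzero; and there exists a vector v : Fin n → ℝ with v(i) ∈ {−1, 1} for every i and M·v = 0. Then M + Δ is not positive semidefinite; that is, there exists w : Fin n → ℝ with wᵀ(M + Δ)w < 0. -/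
open Matrix

/-- If `M` is symmetric positive semidefinite with a `±1` vector in its kernel, and `Δ` is a
nonzero traceless diagonal matrix, then `M + Δ` is not positive semidefinite: some vector `w`
satisfies `wᵀ (M + Δ) w < 0`. -/
theorem psd_plus_traceless_diagonal_not_psd (n : ℕ) (M Δ : Matrix (Fin n) (Fin n) ℝ)
    (hM : M.PosSemidef)
    (hΔdiag : ∀ i j, i ≠ j → Δ i j = 0)
    (hΔtr : Δ.trace = 0)
    (hΔne : Δ ≠ 0)
    (v : Fin n → ℝ) (hv : ∀ i, v i = 1 ∨ v i = -1)
    (hMv : M.mulVec v = 0) :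
    ¬ (M + Δ).PosSemidef ∧ ∃ w : Fin n → ℝ, w ⬝ᵥ (M + Δ).mulVec w < 0 := by
  have hD : Δ = Matrix.diagonal (fun i => Δ i i) := by
    ext i j
    by_cases h : i = j
    · subst h; simp
    · simp [h, hΔdiag i j h]
  have hDv : ∀ i, (Δ.mulVec v) i = Δ i i * v i := by
    intro i
    rw [hD, Matrix.mulVec_diagonal]
    simp
  have hN : ¬ (M + Δ).PosSemidef := by
    intro h
    have h0 : star v ⬝ᵥ (M + Δ).mulVec v = 0 := by
      rw [Matrix.add_mulVec, hMv, zero_add, ← hΔtr]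
      simp only [dotProduct, Matrix.trace, Matrix.diag]
      refine Finset.sum_congr rfl fun i _ => ?_
      rw [hDv]
      rcases hv i with h | h <;> simp [h]
    have h1 := (h.dotProduct_mulVec_zero_iff v).1 h0
    rw [Matrix.add_mulVec, hMv, zero_add] at h1
    apply hΔne
    have h2 : ∀ i, Δ i i = 0 := by
      intro i
      have h3 := congrFun h1 i
      rw [hDv] at h3
      rcases hv i with h | h <;> simpa [h] using h3
    ext i j
    by_cases h : i = j
    · subst h; simpa using h2 i
    · simpa using hΔdiag i j h
  refine ⟨hN, ?_⟩
  by_contra! hc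
  apply hN
  refine Matrix.PosSemidef.of_dotProduct_mulVec_nonneg ?_ ?_
  · refine hM.isHermitian.add ?_
    rw [hD]
    exact Matrix.isHermitian_diagonal _
  · intro x
    simpa using hc x
end

section
/- Let G be a bipartite simple graph on a finite vertex type V, and let c : V → Bool be a 2-coloring of G (c(u) ≠ c(v) whenever u and v are adjacent). For each connected component C of G define v_C : V → ℝ by v_C(u) = 1 if u ∈ C and c(u) = true, v_C(u) = −1 if u ∈ C and c(u) = false, and v_C(u) = 0 if u ∉ C. Then the family (v_C), indexed by the connected components of G, is a basis of the kernel {x : V → ℝ | Q(G)·x = 0} of the signless Laplacian Q(G), regarded as an ℝ-subspace of V → ℝ. -/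
open Matrix

/-- Signless Laplacian `Q = D + A`. -/
noncomputable def lapQ {V : Type*} [Fintype V] [DecidableEq V] (G : SimpleGraph V) :
    Matrix V V ℝ :=
  degM G + adjM G

-- The vector associated to a connected component `C` of `G` and a 2-coloring `c`:
-- it is `1` on vertices of `C` colored `true`, `-1` on vertices of `C` colored `false`,
-- and `0` outside of `C`.
open scoped Classical in
noncomputable def compVec {V : Type*} (G : SimpleGraph V) (c : V → Bool)
    (C : G.ConnectedComponent) : V → ℝ :=
  fun u => if G.connectedComponentMk u = C then (if c u then 1 else -1) else 0

noncomputable def sgnC {V : Type*} (c : V → Bool) (u : V) : ℝ := if c u then 1 else -1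

lemma sgnC_mul_self {V : Type*} (c : V → Bool) (u : V) : sgnC c u * sgnC c u = 1 := by
  unfold sgnC; split_ifs <;> norm_num

lemma sgnC_adj {V : Type*} {c : V → Bool} {u v : V} (h : c u ≠ c v) :
    sgnC c u = - sgnC c v := by
  unfold sgnC
  cases hu : c u <;> cases hv : c v <;> simp_all

open scoped Classical in
lemma lapQ_mulVec_eq {V : Type*} [Fintype V] [DecidableEq V]
    (G : SimpleGraph V) (c : V → Bool) (hc : ∀ u v, G.Adj u v → c u ≠ c v) (x : V → ℝ) (v : V) :
    (lapQ G *ᵥ x) v = sgnC c v * (G.lapMatrix ℝ *ᵥ (fun u => sgnC c u * x u)) v := by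
  rw [SimpleGraph.lapMatrix_mulVec_apply, SimpleGraph.degree_eq_sum_if_adj,
    SimpleGraph.neighborFinset_eq_filter, Finset.sum_filter, mul_sub, Finset.mul_sum, lapQ,
    Matrix.add_mulVec, Pi.add_apply, degM, Matrix.mulVec_diagonal, sub_eq_add_neg,
    ← Finset.sum_neg_distrib]
  congr 1
  · linear_combination (-(∑ u, if G.Adj v u then (1 : ℝ) else 0) * x v) * sgnC_mul_self c v
  · simp only [Matrix.mulVec, dotProduct, adjM, Matrix.of_apply]
    refine Finset.sum_congr rfl fun u _ => ?_
    split_ifs with h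
    · have h1 := sgnC_adj (hc v u h)
      have h2 := sgnC_mul_self c u
      rw [h1]
      linear_combination (-x u) * h2
    · simp

lemma mem_ker_lapQ_iff {V : Type*} [Fintype V] [DecidableEq V]
    (G : SimpleGraph V) (c : V → Bool) (hc : ∀ u v, G.Adj u v → c u ≠ c v) (x : V → ℝ) :
    x ∈ LinearMap.ker (lapQ G).mulVecLin ↔
      ∀ i j, G.Reachable i j → sgnC c i * x i = sgnC c j * x j := by
  classical
  rw [← SimpleGraph.lapMatrix_mulVec_eq_zero_iff_forall_reachable (G := G)
    (x := fun u => sgnC c u * x u), LinearMap.mem_ker, Matrix.mulVecLin_apply]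
  constructor
  · intro h
    funext v
    have h1 := lapQ_mulVec_eq G c hc x v
    rw [h] at h1
    have h2 : sgnC c v ≠ 0 := fun h0 => by simpa [h0] using sgnC_mul_self c v
    rcases mul_eq_zero.mp h1.symm with h3 | h3
    · exact absurd h3 h2
    · exact h3
  · intro h
    funext v
    rw [lapQ_mulVec_eq G c hc x v, h]
    simp

noncomputable def kerEquivQ {V : Type*} [Fintype V] [DecidableEq V]
    (G : SimpleGraph V) (c : V → Bool) (hc : ∀ u v, G.Adj u v → c u ≠ c v) :
    LinearMap.ker (lapQ G).mulVecLin ≃ₗ[ℝ] (G.ConnectedComponent → ℝ) where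
  toFun x C := sgnC c (Quot.out C) * x.1 (Quot.out C)
  map_add' x y := by funext C; simp [mul_add]
  map_smul' r x := by funext C; simp; ring
  invFun f := ⟨fun u => sgnC c u * f (G.connectedComponentMk u), by
    rw [mem_ker_lapQ_iff G c hc]
    intro i j h
    rw [← mul_assoc, ← mul_assoc, sgnC_mul_self, sgnC_mul_self,
      SimpleGraph.ConnectedComponent.sound h]⟩
  left_inv x := by
    apply Subtype.ext
    funext u
    have h := (mem_ker_lapQ_iff G c hc x.1).1 x.2 (Quot.out (G.connectedComponentMk u)) u
      (SimpleGraph.ConnectedComponent.exact (Quot.out_eq (G.connectedComponentMk u)))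
    change sgnC c u * (sgnC c _ * x.1 _) = x.1 u
    rw [h, ← mul_assoc, sgnC_mul_self, one_mul]
  right_inv f := by
    funext C
    change sgnC c _ * (sgnC c _ * f (G.connectedComponentMk (Quot.out C))) = f C
    rw [← mul_assoc, sgnC_mul_self, one_mul]
    exact congrArg f (Quot.out_eq C)

/-- For a bipartite graph `G` with 2-coloring `c`, the family of component vectors `v_C`
indexed by the connected components of `G` is a basis of the kernel of the signless
Laplacian `Q(G)`. -/
theorem compVec_basis_of_kernel_lapQ {V : Type*} [Fintype V] [DecidableEq V]
    (G : SimpleGraph V) (c : V → Bool) (hc : ∀ u v, G.Adj u v → c u ≠ c v) :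
    (∀ C : G.ConnectedComponent, compVec G c C ∈ LinearMap.ker (lapQ G).mulVecLin) ∧
    ∃ b : Module.Basis G.ConnectedComponent ℝ (LinearMap.ker (lapQ G).mulVecLin),
      ∀ C : G.ConnectedComponent, (b C : V → ℝ) = compVec G c C := by
  classical
  have : Finite G.ConnectedComponent := Quot.finite _
  have key : ∀ C, ((Module.Basis.ofEquivFun (kerEquivQ G c hc) C :
      LinearMap.ker (lapQ G).mulVecLin) : V → ℝ) = compVec G c C := by
    intro C
    rw [Module.Basis.coe_ofEquivFun]
    funext u
    change sgnC c u * (Pi.single C (1 : ℝ) : G.ConnectedComponent → ℝ)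
      (G.connectedComponentMk u) = _
    simp [compVec, sgnC, Pi.single_apply]
  exact ⟨fun C => key C ▸ Subtype.property _, _, key⟩
end

section
/- Let G be a simple graph on a finite vertex type V that is not bipartite. Then the real matrices L(G) and Q(G) have different ranks, and consequently there is no unitary complex V×V matrix U with Q(G) = U · L(G) · U† (where L(G) and Q(G) are regarded as complex matrices); in particular the trace-normalized grid states ρ_L(G) = L(G)/tr L(G) and ρ_Q(G) = Q(G)/tr Q(G) are not unitarily equivalent. -/
open Matrix

/-- A simple graph is bipartite if it admits a proper 2-coloring. -/
def IsBipartite {V : Type*} (G : SimpleGraph V) : Prop :=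
  ∃ c : V → Bool, ∀ u v, G.Adj u v → c u ≠ c v

lemma aux_rank_map {V : Type*} [Fintype V] [DecidableEq V] (M : Matrix V V ℝ) :
    (M.map (fun a => (a : ℂ))).rank = M.rank := by
  classical
  obtain ⟨L, L', D, hM⟩ := Matrix.Pivot.exists_list_transvec_mul_diagonal_mul_list_transvec M
  set P := (L.map TransvectionStruct.toMatrix).prod
  set P' := (L'.map TransvectionStruct.toMatrix).prod
  have hP : P.det = 1 := TransvectionStruct.det_toMatrix_prod L
  have hP' : P'.det = 1 := TransvectionStruct.det_toMatrix_prod L'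
  have hmap : M.map (fun a => (a : ℂ)) =
      Complex.ofRealHom.mapMatrix P * diagonal (fun i => (D i : ℂ)) *
        Complex.ofRealHom.mapMatrix P' := by
    have : M.map (fun a => (a : ℂ)) = Complex.ofRealHom.mapMatrix M := rfl
    rw [this, hM, map_mul, map_mul]
    congr 2
    ext i j
    by_cases h : i = j <;> simp [diagonal_apply, h]
  have h1 : (Complex.ofRealHom.mapMatrix P).det = 1 := by
    rw [← RingHom.map_det, hP, map_one]
  have h2 : (Complex.ofRealHom.mapMatrix P').det = 1 := by
    rw [← RingHom.map_det, hP', map_one]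
  rw [hmap, rank_mul_eq_left_of_isUnit_det _ _ (by rw [h2]; exact isUnit_one),
    rank_mul_eq_right_of_isUnit_det _ _ (by rw [h1]; exact isUnit_one), hM,
    rank_mul_eq_left_of_isUnit_det _ _ (by rw [hP']; exact isUnit_one),
    rank_mul_eq_right_of_isUnit_det _ _ (by rw [hP]; exact isUnit_one),
    rank_diagonal, rank_diagonal]
  simp

lemma aux_rank_conj {V : Type*} [Fintype V] [DecidableEq V] (M U : Matrix V V ℂ)
    (h1 : star U * U = 1) (h2 : U * star U = 1) : (U * M * star U).rank = M.rank := by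
  have hU : IsUnit U.det := (isUnit_iff_isUnit_det U).1 ⟨⟨U, star U, h2, h1⟩, rfl⟩
  have hU' : IsUnit (star U).det := (isUnit_iff_isUnit_det _).1 ⟨⟨star U, U, h1, h2⟩, rfl⟩
  rw [rank_mul_eq_left_of_isUnit_det _ _ hU', rank_mul_eq_right_of_isUnit_det _ _ hU]

open scoped Classical in
lemma aux_mulVec_L {V : Type*} [Fintype V] [DecidableEq V] (G : SimpleGraph V) (x : V → ℝ)
    (u : V) : (lapL G *ᵥ x) u = ∑ v, if G.Adj u v then x u - x v else 0 := by
  simp only [lapL, degM, adjM, sub_mulVec, Pi.sub_apply, mulVec_diagonal]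
  simp only [mulVec, dotProduct, of_apply, Finset.sum_mul, ← Finset.sum_sub_distrib]
  refine Finset.sum_congr rfl fun v _ => ?_
  split_ifs <;> ring

open scoped Classical in
lemma aux_mulVec_Q {V : Type*} [Fintype V] [DecidableEq V] (G : SimpleGraph V) (x : V → ℝ)
    (u : V) : (lapQ G *ᵥ x) u = ∑ v, if G.Adj u v then x u + x v else 0 := by
  simp only [lapQ, degM, adjM, add_mulVec, Pi.add_apply, mulVec_diagonal]
  simp only [mulVec, dotProduct, of_apply, Finset.sum_mul, ← Finset.sum_add_distrib]
  refine Finset.sum_congr rfl fun v _ => ?_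
  split_ifs <;> ring

lemma aux_ker_L {V : Type*} [Fintype V] [DecidableEq V] (G : SimpleGraph V) (x : V → ℝ)
    (h : ∀ u v, G.Adj u v → x u = x v) : lapL G *ᵥ x = 0 := by
  classical
  ext u
  rw [aux_mulVec_L]
  refine Finset.sum_eq_zero fun v _ => ?_
  split_ifs with hh
  · rw [h u v hh, sub_self]
  · rfl

lemma aux_ker_Q {V : Type*} [Fintype V] [DecidableEq V] (G : SimpleGraph V) (x : V → ℝ)
    (h : lapQ G *ᵥ x = 0) (u v : V) (huv : G.Adj u v) : x u = - x v := by
  classical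
  have h0 : ∑ u, ∑ v, (if G.Adj u v then x u * (x u + x v) else 0) = 0 := by
    refine Finset.sum_eq_zero fun u _ => ?_
    have := congrFun h u
    rw [aux_mulVec_Q, Pi.zero_apply] at this
    refine Eq.trans ?_ ((congrArg (x u * ·) this).trans (mul_zero _))
    simp only [Finset.mul_sum]
    refine Finset.sum_congr rfl fun v _ => ?_
    split_ifs <;> ring
  have h1 : ∑ u, ∑ v, (if G.Adj u v then x v * (x u + x v) else 0) = 0 := by
    rw [Finset.sum_comm]
    refine Eq.trans ?_ h0
    refine Finset.sum_congr rfl fun u _ => Finset.sum_congr rfl fun v _ => ?_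
    simp only [G.adj_comm u v, add_comm (x u)]
  have h2 : ∑ u, ∑ v, (if G.Adj u v then (x u + x v) ^ 2 else 0) = 0 := by
    have := congrArg₂ (· + ·) h0 h1
    simp only [← Finset.sum_add_distrib, add_zero] at this
    refine Eq.trans ?_ this
    refine Finset.sum_congr rfl fun u _ => Finset.sum_congr rfl fun v _ => ?_
    split_ifs <;> ring
  have hn : ∀ u v, 0 ≤ (if G.Adj u v then (x u + x v) ^ 2 else 0) := by
    intro u v; split_ifs <;> positivity
  rw [Finset.sum_eq_zero_iff_of_nonneg (fun u _ => Finset.sum_nonneg fun v _ => hn u v)] at h2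
  have h3 := h2 u (Finset.mem_univ u)
  rw [Finset.sum_eq_zero_iff_of_nonneg (fun v _ => hn u v)] at h3
  have h4 := h3 v (Finset.mem_univ v)
  rw [if_pos huv] at h4
  have := pow_eq_zero_iff (two_ne_zero) |>.1 h4
  linarith

lemma aux_reach {V : Type*} [Fintype V] [DecidableEq V] (G : SimpleGraph V) (x : V → ℝ)
    (h : lapQ G *ᵥ x = 0) (u v : V) (huv : G.Reachable u v) (hx : x u = 0) : x v = 0 := by
  obtain ⟨p⟩ := huv
  induction p with
  | nil => exact hx
  | cons hadj p ih =>
    apply ih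
    have := aux_ker_Q G x h _ _ hadj
    linarith

lemma aux_ker_lt {V : Type*} [Fintype V] [DecidableEq V] (G : SimpleGraph V)
    (hG : ¬ IsBipartite G) :
    Module.finrank ℝ (LinearMap.ker (lapQ G).mulVecLin) <
      Module.finrank ℝ (LinearMap.ker (lapL G).mulVecLin) := by
  classical
  have hf : ∀ c : G.ConnectedComponent, ∃ f : V → ℝ, lapQ G *ᵥ f = 0 ∧
      ∀ v, G.connectedComponentMk v = c → f v = 0 →
        ∀ x : V → ℝ, lapQ G *ᵥ x = 0 → x v = 0 := by
    intro c
    by_cases hc : ∃ x : V → ℝ, lapQ G *ᵥ x = 0 ∧ ∃ v, G.connectedComponentMk v = c ∧ x v ≠ 0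
    · obtain ⟨f, hf, w, hw, hfw⟩ := hc
      refine ⟨f, hf, fun v hv hfv => absurd ?_ hfw⟩
      exact aux_reach G f hf v w (SimpleGraph.ConnectedComponent.exact (hv.trans hw.symm)) hfv
    · push Not at hc
      exact ⟨0, by simp, fun v hv _ x hx => hc x hx v hv⟩
  choose f hf0 hf using hf
  let g : V → ℝ := fun v => f (G.connectedComponentMk v) v
  let t : V → ℝ := fun v => if g v = 0 then 1 else g v
  have ht : ∀ v, t v ≠ 0 := by
    intro v
    by_cases h : g v = 0 <;> simp [t, h]
  let T : (V → ℝ) →ₗ[ℝ] (V → ℝ) := LinearMap.mulLeft ℝ t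
  have hTinj : Function.Injective T := by
    intro x y hxy
    ext v
    have := congrFun hxy v
    simpa [T, ht v] using this
  have hlt : (LinearMap.ker (lapQ G).mulVecLin).map T < LinearMap.ker (lapL G).mulVecLin := by
    rw [SetLike.lt_iff_le_and_exists]
    constructor
    · rintro _ ⟨x, hx, rfl⟩
      have hx : lapQ G *ᵥ x = 0 := hx
      rw [LinearMap.mem_ker, mulVecLin_apply]
      refine aux_ker_L G _ fun u v huv => ?_
      have hcc : G.connectedComponentMk u = G.connectedComponentMk v :=
        SimpleGraph.ConnectedComponent.sound huv.reachable
      have hxuv := aux_ker_Q G x hx u v huv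
      have hguv : g u = - g v := by
        simp only [g, hcc]
        exact aux_ker_Q G _ (hf0 _) u v huv
      change t u * x u = t v * x v
      by_cases h : g v = 0
      · have : x v = 0 := hf _ v rfl h x hx
        rw [hxuv, this]; simp
      · have h' : g u ≠ 0 := by rw [hguv]; exact neg_ne_zero.2 h
        simp only [t, h, h', if_false]
        rw [hguv, hxuv]; ring
    · refine ⟨fun _ => 1, ?_, ?_⟩
      · rw [LinearMap.mem_ker, mulVecLin_apply]
        exact aux_ker_L G _ fun _ _ _ => rfl
      · rintro ⟨x, hx, hTx⟩
        have hx : lapQ G *ᵥ x = 0 := hx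
        apply hG
        refine ⟨fun v => decide (0 < x v), fun u v huv => ?_⟩
        have hxuv := aux_ker_Q G x hx u v huv
        have hne : x v ≠ 0 := by
          intro h0
          have : t v * x v = 1 := congrFun hTx v
          rw [h0, mul_zero] at this
          exact zero_ne_one this
        rcases lt_or_gt_of_ne hne with h | h
        · simp [hxuv, h, h.le]
        · simp [hxuv, h, h.le]
  have := Submodule.finrank_lt_finrank_of_lt hlt
  rwa [← (Submodule.equivMapOfInjective T hTinj _).finrank_eq] at this

lemma aux_rank_ne {V : Type*} [Fintype V] [DecidableEq V] (G : SimpleGraph V)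
    (hG : ¬ IsBipartite G) : (lapL G).rank ≠ (lapQ G).rank := by
  have h := aux_ker_lt G hG
  have h1 := LinearMap.finrank_range_add_finrank_ker (lapL G).mulVecLin
  have h2 := LinearMap.finrank_range_add_finrank_ker (lapQ G).mulVecLin
  unfold Matrix.rank
  omega

lemma aux_trace {V : Type*} [Fintype V] [DecidableEq V] (G : SimpleGraph V) :
    (lapL G).trace = (degM G).trace ∧ (lapQ G).trace = (degM G).trace := by
  have : (adjM G).trace = 0 := by simp [Matrix.trace, adjM]
  simp [lapL, lapQ, trace_sub, trace_add, this]

lemma aux_trace_ne {V : Type*} [Fintype V] [DecidableEq V] (G : SimpleGraph V)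
    (hG : ¬ IsBipartite G) : (degM G).trace ≠ 0 := by
  classical
  intro h
  apply hG
  refine ⟨fun _ => true, fun u v huv => ?_⟩
  exfalso
  have hn : ∀ u v, 0 ≤ (if G.Adj u v then (1 : ℝ) else 0) := by
    intro u v; split_ifs <;> norm_num
  have h2 : ∑ u, ∑ v, (if G.Adj u v then (1 : ℝ) else 0) = 0 := by
    simpa only [degM, trace_diagonal] using h
  rw [Finset.sum_eq_zero_iff_of_nonneg (fun u _ => Finset.sum_nonneg fun v _ => hn u v)] at h2
  have h3 := h2 u (Finset.mem_univ u)
  rw [Finset.sum_eq_zero_iff_of_nonneg (fun v _ => hn u v)] at h3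
  have h4 := h3 v (Finset.mem_univ v)
  rw [if_pos huv] at h4
  exact one_ne_zero h4

/-- For a non-bipartite graph `G`, `L(G)` and `Q(G)` have different ranks; hence no unitary
`U` conjugates (the complexification of) `L(G)` into `Q(G)`, and likewise the trace-normalized
states `L(G)/tr L(G)` and `Q(G)/tr Q(G)` are not unitarily equivalent. -/
theorem lapL_lapQ_not_unitarily_equivalent {V : Type*} [Fintype V] [DecidableEq V]
    (G : SimpleGraph V) (hG : ¬ IsBipartite G) :
    (lapL G).rank ≠ (lapQ G).rank ∧
    (¬ ∃ U : Matrix V V ℂ, star U * U = 1 ∧ U * star U = 1 ∧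
        (lapQ G).map (fun a => (a : ℂ)) =
          U * (lapL G).map (fun a => (a : ℂ)) * star U) ∧
    (¬ ∃ U : Matrix V V ℂ, star U * U = 1 ∧ U * star U = 1 ∧
        (((lapQ G).map fun a => (a : ℂ)).trace)⁻¹ • ((lapQ G).map fun a => (a : ℂ)) =
          U * ((((lapL G).map fun a => (a : ℂ)).trace)⁻¹ •
            ((lapL G).map fun a => (a : ℂ))) * star U) := by
  have hr := aux_rank_ne G hG
  have htr : ∀ M : Matrix V V ℝ, (M.map fun a => (a : ℂ)).trace = (M.trace : ℂ) := by
    intro M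
    simp [Matrix.trace]
  refine ⟨hr, ?_, ?_⟩
  · rintro ⟨U, h1, h2, h⟩
    apply hr
    have := congrArg Matrix.rank h
    rw [aux_rank_conj _ _ h1 h2, aux_rank_map, aux_rank_map] at this
    exact this.symm
  · rintro ⟨U, h1, h2, h⟩
    apply hr
    have hc : (((degM G).trace : ℂ))⁻¹ ∈ nonZeroDivisors ℂ :=
      mem_nonZeroDivisors_of_ne_zero
        (inv_ne_zero (Complex.ofReal_ne_zero.2 (aux_trace_ne G hG)))
    have := congrArg Matrix.rank h
    rw [aux_rank_conj _ _ h1 h2, htr, htr, (aux_trace G).1, (aux_trace G).2,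
      rank_smul_of_mem_nonZeroDivisors _ hc, rank_smul_of_mem_nonZeroDivisors _ hc,
      aux_rank_map, aux_rank_map] at this
    exact this.symm
end

section
/- Let V be a finite type and let w and w' be weight functions on V with equal supports, i.e., for all u, v ∈ V, w u v ≠ 0 ↔ w' u v ≠ 0. Then the weighted signed Laplacians have identical kernels and the weighted signless Laplacians have identical kernels: for every x : V → ℝ, L_w·x = 0 ↔ L_{w'}·x = 0, and Q_w·x = 0 ↔ Q_{w'}·x = 0. -/
open Matrix

/-- Adjacency matrix of a weight function. -/
def adjW {V : Type*} (w : V → V → ℝ) : Matrix V V ℝ := Matrix.of w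

/-- Degree matrix of a weight function. -/
noncomputable def degW {V : Type*} [Fintype V] [DecidableEq V] (w : V → V → ℝ) :
    Matrix V V ℝ :=
  Matrix.diagonal fun v => ∑ u, w v u

theorem kernel_aux {V : Type*} [Fintype V] (w : V → V → ℝ) (s : ℝ) (hs : s * s = 1)
    (hsymm : ∀ u v, w u v = w v u) (hnn : ∀ u v, 0 ≤ w u v) (x : V → ℝ) :
    (∀ v, ∑ u, w v u * (x v + s * x u) = 0) ↔ ∀ v u, w v u ≠ 0 → x v + s * x u = 0 := by
  constructor
  · intro h
    have h1 : ∑ v, ∑ u, x v * (w v u * (x v + s * x u)) = 0 := by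
      simp only [← Finset.mul_sum, h, mul_zero, Finset.sum_const_zero]
    have h2 : ∑ v, ∑ u, x u * (w u v * (x u + s * x v)) = 0 := by
      rw [Finset.sum_comm]; exact h1
    have h3 : ∑ v, ∑ u, w v u * (x v + s * x u) ^ 2 = 0 := by
      rw [← add_zero (0 : ℝ)]
      nth_rewrite 1 [← h1]
      rw [← h2]
      simp only [← Finset.sum_add_distrib]
      refine Finset.sum_congr rfl fun v _ => Finset.sum_congr rfl fun u _ => ?_
      rw [hsymm u v]
      linear_combination (w v u * x u ^ 2) * hs
    intro v u hvu
    have hp : ∀ v u, 0 ≤ w v u * (x v + s * x u) ^ 2 :=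
      fun v u => mul_nonneg (hnn v u) (sq_nonneg _)
    have h4 := (Finset.sum_eq_zero_iff_of_nonneg
      (fun v _ => Finset.sum_nonneg fun u _ => hp v u)).1 h3 v (Finset.mem_univ v)
    have h5 := (Finset.sum_eq_zero_iff_of_nonneg (fun u _ => hp v u)).1 h4 u (Finset.mem_univ u)
    exact pow_eq_zero_iff two_ne_zero |>.1 ((mul_eq_zero.1 h5).resolve_left hvu)
  · intro h v
    refine Finset.sum_eq_zero fun u _ => ?_
    by_cases hw : w v u = 0
    · simp [hw]
    · simp [h v u hw]

theorem sub_aux {V : Type*} [Fintype V] [DecidableEq V] (w : V → V → ℝ) (x : V → ℝ) :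
    (degW w - adjW w).mulVec x = 0 ↔ ∀ v, ∑ u, w v u * (x v + (-1) * x u) = 0 := by
  rw [funext_iff]
  refine forall_congr' fun v => ?_
  rw [Matrix.sub_mulVec, Pi.sub_apply, degW, Matrix.mulVec_diagonal]
  simp [adjW, Matrix.mulVec, dotProduct, mul_add, Finset.sum_add_distrib, Finset.sum_mul,
    sub_eq_add_neg]

theorem add_aux {V : Type*} [Fintype V] [DecidableEq V] (w : V → V → ℝ) (x : V → ℝ) :
    (degW w + adjW w).mulVec x = 0 ↔ ∀ v, ∑ u, w v u * (x v + 1 * x u) = 0 := by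
  rw [funext_iff]
  refine forall_congr' fun v => ?_
  rw [Matrix.add_mulVec, Pi.add_apply, degW, Matrix.mulVec_diagonal]
  simp [adjW, Matrix.mulVec, dotProduct, mul_add, Finset.sum_add_distrib, Finset.sum_mul]

/-- If two weight functions have equal supports, their weighted signed Laplacians have
identical kernels, and likewise for the weighted signless Laplacians. -/
theorem weighted_laplacian_kernels_eq {V : Type*} [Fintype V] [DecidableEq V]
    (w w' : V → V → ℝ)
    (hw_symm : ∀ u v, w u v = w v u) (hw_nonneg : ∀ u v, 0 ≤ w u v)
    (hw_diag : ∀ v, w v v = 0)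
    (hw'_symm : ∀ u v, w' u v = w' v u) (hw'_nonneg : ∀ u v, 0 ≤ w' u v)
    (hw'_diag : ∀ v, w' v v = 0)
    (hsupp : ∀ u v, w u v ≠ 0 ↔ w' u v ≠ 0) :
    ∀ x : V → ℝ,
      ((degW w - adjW w).mulVec x = 0 ↔ (degW w' - adjW w').mulVec x = 0) ∧
      ((degW w + adjW w).mulVec x = 0 ↔ (degW w' + adjW w').mulVec x = 0) := by
  intro x
  rw [sub_aux, sub_aux, add_aux, add_aux,
    kernel_aux w (-1) (by norm_num) hw_symm hw_nonneg,
    kernel_aux w' (-1) (by norm_num) hw'_symm hw'_nonneg,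
    kernel_aux w 1 (by norm_num) hw_symm hw_nonneg,
    kernel_aux w' 1 (by norm_num) hw'_symm hw'_nonneg]
  simp only [hsupp, and_self]
end

section
/- Let (S_l, S_q) be a hybrid graph on a finite vertex type V satisfying the COI condition with coloring c : V → Bool. Then the vector v : V → ℝ defined by v(u) = 1 if c(u) = true and v(u) = −1 otherwise satisfies (L(S_l) + Q(S_q))·v = 0. In particular, every hybrid graph satisfying the NOI condition or the COI condition admits a vector with all entries in {−1, 1} in the kernel of its hybrid Laplacian. -/
open Matrix

/-- The two subgraphs of a hybrid graph have disjoint edge sets. -/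
def EdgeDisjoint {V : Type*} (Sl Sq : SimpleGraph V) : Prop :=
  ∀ u v, ¬ (Sl.Adj u v ∧ Sq.Adj u v)

/-- NOI condition: the `Q`-subgraph is bipartite and no vertex is incident both to an
`L`-edge and to a `Q`-edge. -/
def NOI {V : Type*} (Sl Sq : SimpleGraph V) : Prop :=
  (∃ c : V → Bool, ∀ u v, Sq.Adj u v → c u ≠ c v) ∧
  ∀ u, ¬ ((∃ x, Sl.Adj u x) ∧ (∃ x, Sq.Adj u x))

/-- COI condition: there is a coloring proper for the `Q`-subgraph such that every
`L`-edge joins vertices of the same color. -/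
def COI {V : Type*} (Sl Sq : SimpleGraph V) : Prop :=
  ∃ c : V → Bool, (∀ u v, Sq.Adj u v → c u ≠ c v) ∧ (∀ u v, Sl.Adj u v → c u = c v)

open scoped Classical in
theorem hybrid_aux {V : Type*} [Fintype V] [DecidableEq V]
    (Sl Sq : SimpleGraph V) (c : V → Bool)
    (hq : ∀ u v, Sq.Adj u v → c u ≠ c v) (hl : ∀ u v, Sl.Adj u v → c u = c v) :
    (lapL Sl + lapQ Sq).mulVec (fun u => if c u then (1 : ℝ) else -1) = 0 := by
  funext u
  rw [lapL, lapQ, Matrix.add_mulVec, Matrix.sub_mulVec, Matrix.add_mulVec, degM, degM]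
  simp only [Pi.add_apply, Pi.sub_apply, Matrix.mulVec_diagonal, Pi.zero_apply]
  simp only [Matrix.mulVec, dotProduct, adjM, Matrix.of_apply, Finset.sum_mul]
  rw [← Finset.sum_sub_distrib, ← Finset.sum_add_distrib, ← Finset.sum_add_distrib]
  apply Finset.sum_eq_zero
  intro w _
  have h1 := hq u w
  have h2 := hl u w
  by_cases a : Sl.Adj u w <;> by_cases b : Sq.Adj u w <;> cases hu : c u <;> cases hw : c w <;>
    simp_all

theorem noi_coi {V : Type*} (Sl Sq : SimpleGraph V) (h : NOI Sl Sq) : COI Sl Sq := by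
  classical
  obtain ⟨⟨c, hc⟩, hn⟩ := h
  refine ⟨fun u => if ∃ x, Sq.Adj u x then c u else true, ?_, ?_⟩
  · intro u v huv
    have h1 : ∃ x, Sq.Adj u x := ⟨v, huv⟩
    have h2 : ∃ x, Sq.Adj v x := ⟨u, huv.symm⟩
    simpa only [if_pos h1, if_pos h2] using hc u v huv
  · intro u v huv
    have h1 : ¬ ∃ x, Sq.Adj u x := fun h => hn u ⟨⟨v, huv⟩, h⟩
    have h2 : ¬ ∃ x, Sq.Adj v x := fun h => hn v ⟨⟨u, huv.symm⟩, h⟩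
    simp only [if_neg h1, if_neg h2]

/-- For a hybrid graph satisfying the COI condition with coloring `c`, the `±1` vector
associated to `c` lies in the kernel of the hybrid Laplacian `L(S_l) + Q(S_q)`. In
particular, every hybrid graph satisfying the NOI or the COI condition admits a `±1`
vector in the kernel of its hybrid Laplacian. -/
theorem hybrid_laplacian_pm_one_kernel_vector {V : Type*} [Fintype V] [DecidableEq V]
    (Sl Sq : SimpleGraph V) (hdisj : EdgeDisjoint Sl Sq) (c : V → Bool)
    (hq : ∀ u v, Sq.Adj u v → c u ≠ c v) (hl : ∀ u v, Sl.Adj u v → c u = c v) :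
    (lapL Sl + lapQ Sq).mulVec (fun u => if c u then 1 else -1) = 0 ∧
    ∀ Sl' Sq' : SimpleGraph V, EdgeDisjoint Sl' Sq' → (NOI Sl' Sq' ∨ COI Sl' Sq') →
      ∃ v : V → ℝ, (∀ u, v u = 1 ∨ v u = -1) ∧ (lapL Sl' + lapQ Sq').mulVec v = 0 := by
  refine ⟨hybrid_aux Sl Sq c hq hl, ?_⟩
  intro Sl' Sq' _ h
  obtain ⟨c', h1, h2⟩ : COI Sl' Sq' := h.elim (noi_coi Sl' Sq') id
  refine ⟨fun u => if c' u then (1 : ℝ) else -1, ?_, hybrid_aux Sl' Sq' c' h1 h2⟩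
  intro u
  cases hu : c' u <;> simp [hu]
end

section
/- Degree criterion for hybrid graphs: let m, n : ℕ, V = Fin m × Fin n, and let (S_l, S_q) be a hybrid graph on V with hybrid Laplacian 𝓛 = L(S_l) + Q(S_q) and degree matrix D = D(S_l) + D(S_q). Suppose that 𝓛, regarded as a complex matrix, is separable; that the partial transpose graphs S_l^Γ and S_q^Γ have disjoint edge sets; and that the hybrid graph (S_l^Γ, S_q^Γ) satisfies the NOI condition or the COI condition. Then D = D(S_l^Γ) + D(S_q^Γ), i.e., the degree matrix of the hybrid graph equals the degree matrix of its partial transpose. -/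
open Matrix

open scoped Classical in
noncomputable def dg {V : Type*} [Fintype V] (G : SimpleGraph V) (v : V) : ℝ :=
  ∑ u, if G.Adj v u then (1 : ℝ) else 0

theorem degM_apply' {V : Type*} [Fintype V] [DecidableEq V] (G : SimpleGraph V) (u v : V) :
    degM G u v = if u = v then dg G u else 0 := by
  simp [degM, dg, Matrix.diagonal_apply]

open scoped Classical in
theorem ite_pt {m n : ℕ} (G : SimpleGraph (Fin m × Fin n)) (p q : Fin m × Fin n) :
    (if (ptGraph G).Adj p q then (1 : ℝ) else 0) =
      if G.Adj (p.1, q.2) (q.1, p.2) then 1 else 0 :=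
  if_congr Iff.rfl rfl rfl

theorem sum_dg_pt {m n : ℕ} (G : SimpleGraph (Fin m × Fin n)) :
    ∑ p, dg (ptGraph G) p = ∑ p, dg G p := by
  classical
  unfold dg
  rw [← Finset.sum_product', ← Finset.sum_product']
  refine Finset.sum_bij' (fun a _ => ((a.1.1, a.2.2), (a.2.1, a.1.2)))
    (fun a _ => ((a.1.1, a.2.2), (a.2.1, a.1.2))) ?_ ?_ ?_ ?_ ?_ <;> simp [ite_pt]

theorem coi_of_noi {V : Type*} {A B : SimpleGraph V} (h : NOI A B) : COI A B := by
  classical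
  obtain ⟨⟨c, hc⟩, h2⟩ := h
  refine ⟨fun v => if ∃ x, B.Adj v x then c v else true, fun u v huv => ?_, fun u v huv => ?_⟩
  · have h1 : ∃ x, B.Adj u x := ⟨v, huv⟩
    have h3 : ∃ x, B.Adj v x := ⟨u, huv.symm⟩
    simp only [if_pos h1, if_pos h3]
    exact hc u v huv
  · have h1 : ¬ ∃ x, B.Adj u x := fun h => h2 u ⟨⟨v, huv⟩, h⟩
    have h3 : ¬ ∃ x, B.Adj v x := fun h => h2 v ⟨⟨u, huv.symm⟩, h⟩
    simp only [if_neg h1, if_neg h3]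

/-- Gram matrices: an isotropic real vector is in the kernel. -/
theorem gram_kernel {V : Type*} [Fintype V] (R : V → V → ℝ) (T : Finset ℕ) (z : ℕ → V → ℂ)
    (hR : ∀ p q, (R p q : ℂ) = ∑ t ∈ T, z t p * star (z t q)) (s : V → ℝ)
    (h0 : ∑ p, s p * ∑ q, R p q * s q = 0) (p : V) : ∑ q, R p q * s q = 0 := by
  have key : ∀ p, ((∑ q, R p q * s q : ℝ) : ℂ) = ∑ t ∈ T, z t p * star (∑ q, s q * z t q) := by
    intro p
    push_cast
    simp only [hR, Finset.sum_mul, star_sum, Finset.mul_sum]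
    rw [Finset.sum_comm]
    refine Finset.sum_congr rfl fun t _ => Finset.sum_congr rfl fun q _ => ?_
    simp
    ring
  have h1 : ∑ t ∈ T, Complex.normSq (∑ q, s q * z t q) = 0 := by
    have h2 : ((∑ p, s p * ∑ q, R p q * s q : ℝ) : ℂ) =
        ((∑ t ∈ T, Complex.normSq (∑ q, s q * z t q) : ℝ) : ℂ) := by
      rw [Complex.ofReal_sum, Complex.ofReal_sum]
      simp only [Complex.ofReal_mul, key]
      simp only [Complex.normSq_eq_conj_mul_self, Finset.mul_sum (s := T)]
      rw [Finset.sum_comm]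
      refine Finset.sum_congr rfl fun t _ => ?_
      rw [mul_comm, Finset.sum_mul]
      exact Finset.sum_congr rfl fun q _ => by simp only [starRingEnd_apply]; ring
    rw [h0] at h2
    exact_mod_cast h2.symm
  rw [Finset.sum_eq_zero_iff_of_nonneg fun t _ => Complex.normSq_nonneg _] at h1
  have h3 := key p
  have h4 : ∑ t ∈ T, z t p * star (∑ q, s q * z t q) = 0 :=
    Finset.sum_eq_zero (fun t ht => by rw [Complex.normSq_eq_zero.1 (h1 t ht)]; simp)
  rw [h4] at h3
  exact_mod_cast h3

/-- Degree criterion for hybrid graphs: if the hybrid Laplacian of `(S_l, S_q)` is separable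
and the partial transpose hybrid graph `(S_l^Γ, S_q^Γ)` (with disjoint edge sets) satisfies
the NOI or the COI condition, then the degree matrix of the hybrid graph equals that of its
partial transpose. -/
theorem degree_criterion_hybrid (m n : ℕ) (Sl Sq : SimpleGraph (Fin m × Fin n))
    (hdisj : EdgeDisjoint Sl Sq)
    (hsep : MatrixIsSeparable ((lapL Sl + lapQ Sq).map fun a => (a : ℂ)))
    (hdisjΓ : EdgeDisjoint (ptGraph Sl) (ptGraph Sq))
    (hΓ : NOI (ptGraph Sl) (ptGraph Sq) ∨ COI (ptGraph Sl) (ptGraph Sq)) :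
    degM Sl + degM Sq = degM (ptGraph Sl) + degM (ptGraph Sq) := by
  classical
  have hc : COI (ptGraph Sl) (ptGraph Sq) := hΓ.elim coi_of_noi id
  obtain ⟨c, hq, hl⟩ := hc
  obtain ⟨T, x, y, hxy⟩ := hsep
  set s : Fin m × Fin n → ℝ := fun v => if c v then 1 else -1 with hs
  have hss : ∀ v, s v * s v = 1 := by
    intro v; simp only [hs]; split_ifs <;> norm_num
  have hsl : ∀ u v, (ptGraph Sl).Adj u v → s v = s u := by
    intro u v h; simp only [hs, hl u v h]
  have hsq : ∀ u v, (ptGraph Sq).Adj u v → s v = - s u := by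
    intro u v h
    have := hq u v h
    simp only [hs]
    cases hu : c u <;> cases hv : c v <;> simp_all
  set R : Fin m × Fin n → Fin m × Fin n → ℝ :=
    fun p q => (lapL Sl + lapQ Sq) (p.1, q.2) (q.1, p.2) with hRdef
  have hRz : ∀ p q, (R p q : ℂ) =
      ∑ t ∈ T, (x t p.1 * star (y t p.2)) * star (x t q.1 * star (y t q.2)) := by
    intro p q
    have := hxy p.1 q.1 q.2 p.2
    rw [Matrix.map_apply] at this
    rw [hRdef]
    refine this.trans (Finset.sum_congr rfl fun t _ => ?_)
    simp only [star_mul', star_star]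
    ring
  have hRe : ∀ p q, R p q * s q = (if p = q then (dg Sl p + dg Sq p) * s p else 0)
      - s p * (if (ptGraph Sl).Adj p q then 1 else 0)
      - s p * (if (ptGraph Sq).Adj p q then 1 else 0) := by
    intro p q
    have hR' : R p q = (if p = q then (dg Sl p + dg Sq p) else 0)
        - (if (ptGraph Sl).Adj p q then 1 else 0) + (if (ptGraph Sq).Adj p q then 1 else 0) := by
      have e : degM Sl (p.1, q.2) (q.1, p.2) + degM Sq (p.1, q.2) (q.1, p.2) =
          if p = q then (dg Sl p + dg Sq p) else 0 := by
        rw [degM_apply', degM_apply']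
        obtain ⟨i, j⟩ := p
        obtain ⟨k, l⟩ := q
        by_cases h : i = k ∧ j = l
        · obtain ⟨rfl, rfl⟩ := h; simp
        · have h' : ¬ (i = k ∧ l = j) := fun a => h ⟨a.1, a.2.symm⟩
          simp [Prod.mk.injEq, h, h']
      rw [← e]
      simp only [hRdef, lapL, lapQ, adjM, Matrix.add_apply, Matrix.sub_apply, Matrix.of_apply,
        ite_pt]
      ring
    have a1 : (if (ptGraph Sl).Adj p q then (1:ℝ) else 0) * s q
        = s p * (if (ptGraph Sl).Adj p q then 1 else 0) := by
      split_ifs with h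
      · rw [hsl p q h]; ring
      · ring
    have a2 : (if (ptGraph Sq).Adj p q then (1:ℝ) else 0) * s q
        = - (s p * (if (ptGraph Sq).Adj p q then 1 else 0)) := by
      split_ifs with h
      · rw [hsq p q h]; ring
      · ring
    have a3 : (if p = q then (dg Sl p + dg Sq p) else 0) * s q
        = if p = q then (dg Sl p + dg Sq p) * s p else 0 := by
      split_ifs with h
      · rw [h]
      · ring
    rw [hR', add_mul, sub_mul, a1, a2, a3]
    ring
  have hRs : ∀ p, ∑ q, R p q * s q =
      s p * (dg Sl p + dg Sq p - dg (ptGraph Sl) p - dg (ptGraph Sq) p) := by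
    intro p
    simp only [hRe, Finset.sum_sub_distrib, ← Finset.mul_sum]
    rw [Finset.sum_ite_eq, if_pos (Finset.mem_univ _)]
    simp only [dg]
    ring
  have h0 : ∑ p, s p * ∑ q, R p q * s q = 0 := by
    simp only [hRs, ← mul_assoc, hss, one_mul, Finset.sum_sub_distrib, Finset.sum_add_distrib,
      sum_dg_pt]
    ring
  have hk := gram_kernel R T _ hRz s h0
  ext u v
  simp only [Matrix.add_apply, degM_apply']
  split_ifs with h
  · have h1 := hk u
    rw [hRs u] at h1
    have h2 : s u ≠ 0 := fun h => by have := hss u; rw [h] at this; norm_num at this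
    have := (mul_eq_zero.1 h1).resolve_left h2
    linarith
  · rfl
end

section
/- Every COI hybrid graph has a proxy NOI hybrid graph with the same kernel: if (S_l, S_q) is a hybrid graph on a finite vertex type V satisfying the COI condition, then there exists a hybrid graph (S_l', S_q') on V satisfying the NOI condition such that the kernels of the hybrid Laplacians coincide, i.e., for every x : V → ℝ, (L(S_l') + Q(S_q'))·x = 0 ↔ (L(S_l) + Q(S_q))·x = 0. -/
open Matrix

open scoped Classical in
lemma hyb_mulVec {V : Type*} [Fintype V] [DecidableEq V] (Sl Sq : SimpleGraph V) (x : V → ℝ)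
    (u : V) : (lapL Sl + lapQ Sq).mulVec x u =
      ∑ v, ((if Sl.Adj u v then (1 : ℝ) else 0) * (x u - x v) +
        (if Sq.Adj u v then (1 : ℝ) else 0) * (x u + x v)) := by
  simp only [lapL, lapQ, degM, adjM, Matrix.add_mulVec, Matrix.sub_mulVec, Pi.add_apply,
    Pi.sub_apply, Matrix.mulVec_diagonal]
  simp only [Matrix.mulVec, dotProduct, Matrix.of_apply, Finset.sum_mul]
  rw [← Finset.sum_sub_distrib, ← Finset.sum_add_distrib, ← Finset.sum_add_distrib]
  refine Finset.sum_congr rfl fun v _ => ?_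
  ring

lemma hyb_ker {V : Type*} [Fintype V] [DecidableEq V] (Sl Sq : SimpleGraph V) (x : V → ℝ) :
    (lapL Sl + lapQ Sq).mulVec x = 0 ↔
      (∀ u v, Sl.Adj u v → x u = x v) ∧ (∀ u v, Sq.Adj u v → x u = - x v) := by
  classical
  constructor
  · intro h
    have key : ∑ u, ∑ v, ((if Sl.Adj u v then (1 : ℝ) else 0) * (x u - x v) ^ 2 +
        (if Sq.Adj u v then (1 : ℝ) else 0) * (x u + x v) ^ 2) = 0 := by
      have h1 : ∑ u, ∑ v, x u * ((if Sl.Adj u v then (1 : ℝ) else 0) * (x u - x v) +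
          (if Sq.Adj u v then (1 : ℝ) else 0) * (x u + x v)) = 0 := by
        refine Finset.sum_eq_zero fun u _ => ?_
        rw [← Finset.mul_sum, ← hyb_mulVec, h]
        simp
      have h2 := h1
      rw [Finset.sum_comm] at h2
      have h3 := congrArg₂ (· + ·) h1 h2
      simp only [← Finset.sum_add_distrib, add_zero] at h3
      refine Eq.trans ?_ h3
      refine Finset.sum_congr rfl fun u _ => Finset.sum_congr rfl fun v _ => ?_
      rw [Sl.adj_comm v u, Sq.adj_comm v u]
      ring
    have nn : ∀ u v, 0 ≤ (if Sl.Adj u v then (1 : ℝ) else 0) * (x u - x v) ^ 2 +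
        (if Sq.Adj u v then (1 : ℝ) else 0) * (x u + x v) ^ 2 := by
      intro u v
      split_ifs <;> positivity
    have z : ∀ u v, (if Sl.Adj u v then (1 : ℝ) else 0) * (x u - x v) ^ 2 +
        (if Sq.Adj u v then (1 : ℝ) else 0) * (x u + x v) ^ 2 = 0 := by
      intro u v
      have h4 := (Finset.sum_eq_zero_iff_of_nonneg
        (fun u _ => Finset.sum_nonneg fun v _ => nn u v)).1 key u (Finset.mem_univ u)
      exact (Finset.sum_eq_zero_iff_of_nonneg (fun v _ => nn u v)).1 h4 v (Finset.mem_univ v)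
    constructor
    · intro u v huv
      have h5 := z u v
      rw [if_pos huv] at h5
      have : (x u - x v) ^ 2 = 0 := by
        split_ifs at h5 <;> nlinarith [sq_nonneg (x u - x v), sq_nonneg (x u + x v)]
      have := pow_eq_zero_iff (two_ne_zero) |>.1 this
      linarith
    · intro u v huv
      have h5 := z u v
      rw [if_pos huv] at h5
      have : (x u + x v) ^ 2 = 0 := by
        split_ifs at h5 <;> nlinarith [sq_nonneg (x u - x v), sq_nonneg (x u + x v)]
      have := pow_eq_zero_iff (two_ne_zero) |>.1 this
      linarith
  · rintro ⟨h1, h2⟩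
    funext u
    rw [hyb_mulVec]
    refine Finset.sum_eq_zero fun v _ => ?_
    have a : Sl.Adj u v → x u - x v = 0 := fun h => by rw [h1 u v h]; ring
    have b : Sq.Adj u v → x u + x v = 0 := fun h => by rw [h2 u v h]; ring
    split_ifs with p q q <;> simp_all

/-- Every COI hybrid graph has a proxy NOI hybrid graph whose hybrid Laplacian has the same
kernel. -/
theorem coi_has_noi_proxy {V : Type*} [Fintype V] [DecidableEq V]
    (Sl Sq : SimpleGraph V) (hdisj : EdgeDisjoint Sl Sq) (hcoi : COI Sl Sq) :
    ∃ Sl' Sq' : SimpleGraph V, EdgeDisjoint Sl' Sq' ∧ NOI Sl' Sq' ∧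
      ∀ x : V → ℝ,
        (lapL Sl' + lapQ Sq').mulVec x = 0 ↔ (lapL Sl + lapQ Sq).mulVec x = 0 := by
  obtain ⟨c, hq, hl⟩ := hcoi
  let G := Sl ⊔ Sq
  let Sq' : SimpleGraph V :=
    { Adj := fun u v => G.Reachable u v ∧ c u ≠ c v
      symm := ⟨fun u v h => ⟨h.1.symm, h.2.symm⟩⟩
      loopless := ⟨fun u h => h.2 rfl⟩ }
  let Sl' : SimpleGraph V :=
    { Adj := fun u v => Sl.Adj u v ∧ ∀ w, G.Reachable u w → c w = c u
      symm := ⟨fun u v h => ⟨h.1.symm, fun w hw => by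
        have r : G.Reachable u v := SimpleGraph.Adj.reachable (Or.inl h.1)
        rw [h.2 w (r.trans hw), h.2 v r]⟩⟩
      loopless := ⟨fun u h => Sl.loopless.irrefl u h.1⟩ }
  refine ⟨Sl', Sq', ?_, ⟨⟨c, fun u v h => h.2⟩, ?_⟩, ?_⟩
  · rintro u v ⟨h1, h2⟩
    exact h2.2 (h1.2 v h2.1).symm
  · rintro u ⟨⟨v, h1⟩, ⟨w, h2⟩⟩
    exact h2.2 (h1.2 w h2.1).symm
  intro x
  rw [hyb_ker, hyb_ker]
  constructor
  · rintro ⟨h1, h2⟩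
    constructor
    · intro u v huv
      by_cases hm : ∀ w, G.Reachable u w → c w = c u
      · exact h1 u v ⟨huv, hm⟩
      · push Not at hm
        obtain ⟨w, hw, hc⟩ := hm
        have r : G.Reachable u v := SimpleGraph.Adj.reachable (Or.inl huv)
        have e1 := h2 u w ⟨hw, hc.symm⟩
        have e2 := h2 v w ⟨r.symm.trans hw, by rw [← hl u v huv]; exact hc.symm⟩
        rw [e1, e2]
    · intro u v huv
      exact h2 u v ⟨SimpleGraph.Adj.reachable (Or.inr huv), hq u v huv⟩
  · rintro ⟨h1, h2⟩
    refine ⟨fun u v h => h1 u v h.1, ?_⟩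
    have key : ∀ u v, G.Reachable u v → (c u = c v → x u = x v) ∧ (c u ≠ c v → x u = - x v) := by
      rintro u v ⟨p⟩
      induction p with
      | nil => simp
      | @cons a b d hab p ih =>
        rcases hab with hab | hab
        · rw [hl a b hab, h1 a b hab]
          exact ih
        · have e := h2 a b hab
          have n := hq a b hab
          obtain ⟨i1, i2⟩ := ih
          constructor
          · intro h
            have := i2 (by rw [← h]; exact n.symm)
            rw [e, this]; ring
          · intro h
            have := i1 (by revert n h; cases c a <;> cases c b <;> cases c d <;> simp)
            rw [e, this]
    exact fun u v h => (key u v h.1).2 h.2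
end

section
/- Let V be a finite type and let w_l, w_q, w_l', w_q' be weight functions on V such that the supports of w_l and w_q are disjoint, the supports of w_l' and w_q' are disjoint, the support of w_l' equals the support of w_l, and the support of w_q' equals the support of w_q. Define the weighted hybrid Laplacian 𝓛(w_l, w_q) = (D_{w_l} − A_{w_l}) + (D_{w_q} + A_{w_q}). Then the kernels coincide: for every x : V → ℝ, 𝓛(w_l, w_q)·x = 0 ↔ 𝓛(w_l', w_q')·x = 0. -/
open Matrix

/-- Weighted hybrid Laplacian `𝓛(w_l, w_q) = (D_{w_l} − A_{w_l}) + (D_{w_q} + A_{w_q})`. -/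
noncomputable def hybridLap {V : Type*} [Fintype V] [DecidableEq V] (wl wq : V → V → ℝ) :
    Matrix V V ℝ :=
  (degW wl - adjW wl) + (degW wq + adjW wq)

theorem hybridLap_mulVec_apply {V : Type*} [Fintype V] [DecidableEq V] (wl wq : V → V → ℝ)
    (x : V → ℝ) (v : V) :
    (hybridLap wl wq).mulVec x v
      = ∑ u, (wl v u * (x v - x u) + wq v u * (x v + x u)) := by
  simp only [hybridLap, degW, adjW, Matrix.add_mulVec, Matrix.sub_mulVec, Pi.add_apply,
    Pi.sub_apply, Matrix.mulVec_diagonal]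
  simp only [Matrix.mulVec, dotProduct, Matrix.of_apply, Finset.sum_mul,
    ← Finset.sum_add_distrib, ← Finset.sum_sub_distrib]
  refine Finset.sum_congr rfl fun u _ => ?_
  ring

theorem hybridLap_ker_iff {V : Type*} [Fintype V] [DecidableEq V] (wl wq : V → V → ℝ)
    (hl : ∀ u v, wl u v = wl v u) (hl0 : ∀ u v, 0 ≤ wl u v)
    (hq : ∀ u v, wq u v = wq v u) (hq0 : ∀ u v, 0 ≤ wq u v) (x : V → ℝ) :
    (hybridLap wl wq).mulVec x = 0 ↔
      ∀ v u, (wl v u ≠ 0 → x v - x u = 0) ∧ (wq v u ≠ 0 → x v + x u = 0) := by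
  constructor
  · intro h
    have h1 : ∑ v, ∑ u, x v * (wl v u * (x v - x u) + wq v u * (x v + x u)) = 0 := by
      refine Finset.sum_eq_zero fun v _ => ?_
      rw [← Finset.mul_sum, ← hybridLap_mulVec_apply, h]
      simp
    have h2 : ∑ v, ∑ u, x u * (wl u v * (x u - x v) + wq u v * (x u + x v)) = 0 := by
      rw [Finset.sum_comm]; exact h1
    have h3 : ∑ v, ∑ u, (wl v u * (x v - x u) ^ 2 + wq v u * (x v + x u) ^ 2) = 0 := by
      have h4 := congrArg₂ (· + ·) h1 h2
      simp only [← Finset.sum_add_distrib, add_zero] at h4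
      rw [← h4]
      refine Finset.sum_congr rfl fun v _ => Finset.sum_congr rfl fun u _ => ?_
      rw [hl u v, hq u v]
      ring
    have hp : ∀ v u, 0 ≤ wl v u * (x v - x u) ^ 2 := fun v u =>
      mul_nonneg (hl0 v u) (sq_nonneg _)
    have hp' : ∀ v u, 0 ≤ wq v u * (x v + x u) ^ 2 := fun v u =>
      mul_nonneg (hq0 v u) (sq_nonneg _)
    intro v u
    have h5 := (Finset.sum_eq_zero_iff_of_nonneg (fun v _ =>
      Finset.sum_nonneg fun u _ => add_nonneg (hp v u) (hp' v u))).1 h3 v (Finset.mem_univ v)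
    have h6 := (Finset.sum_eq_zero_iff_of_nonneg (fun u _ =>
      add_nonneg (hp v u) (hp' v u))).1 h5 u (Finset.mem_univ u)
    have h7 := (add_eq_zero_iff_of_nonneg (hp v u) (hp' v u)).1 h6
    exact ⟨fun hw => by simpa [hw] using h7.1, fun hw => by simpa [hw] using h7.2⟩
  · intro h
    funext v
    rw [hybridLap_mulVec_apply]
    refine Finset.sum_eq_zero fun u _ => ?_
    obtain ⟨ha, hb⟩ := h v u
    have h1 : wl v u * (x v - x u) = 0 := by
      by_cases hw : wl v u = 0
      · rw [hw, zero_mul]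
      · rw [ha hw, mul_zero]
    have h2 : wq v u * (x v + x u) = 0 := by
      by_cases hw : wq v u = 0
      · rw [hw, zero_mul]
      · rw [hb hw, mul_zero]
    rw [h1, h2, add_zero]

/-- Kernels of weighted hybrid Laplacians only depend on the supports of the weight
functions. -/
theorem weighted_hybrid_laplacian_kernels_eq {V : Type*} [Fintype V] [DecidableEq V]
    (wl wq wl' wq' : V → V → ℝ)
    (hwl_symm : ∀ u v, wl u v = wl v u) (hwl_nonneg : ∀ u v, 0 ≤ wl u v)
    (hwl_diag : ∀ v, wl v v = 0)
    (hwq_symm : ∀ u v, wq u v = wq v u) (hwq_nonneg : ∀ u v, 0 ≤ wq u v)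
    (hwq_diag : ∀ v, wq v v = 0)
    (hwl'_symm : ∀ u v, wl' u v = wl' v u) (hwl'_nonneg : ∀ u v, 0 ≤ wl' u v)
    (hwl'_diag : ∀ v, wl' v v = 0)
    (hwq'_symm : ∀ u v, wq' u v = wq' v u) (hwq'_nonneg : ∀ u v, 0 ≤ wq' u v)
    (hwq'_diag : ∀ v, wq' v v = 0)
    (hdisj : ∀ u v, ¬ (wl u v ≠ 0 ∧ wq u v ≠ 0))
    (hdisj' : ∀ u v, ¬ (wl' u v ≠ 0 ∧ wq' u v ≠ 0))
    (hsuppl : ∀ u v, wl' u v ≠ 0 ↔ wl u v ≠ 0)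
    (hsuppq : ∀ u v, wq' u v ≠ 0 ↔ wq u v ≠ 0) :
    ∀ x : V → ℝ, (hybridLap wl wq).mulVec x = 0 ↔ (hybridLap wl' wq').mulVec x = 0 := by
  intro x
  rw [hybridLap_ker_iff wl wq hwl_symm hwl_nonneg hwq_symm hwq_nonneg,
    hybridLap_ker_iff wl' wq' hwl'_symm hwl'_nonneg hwq'_symm hwq'_nonneg]
  simp only [hsuppl, hsuppq]
end

section
/- Sufficiency of the degree criterion: let m, n : ℕ, V = Fin m × Fin n, and let w_l, w_q be weight functions on V with disjoint supports. Define the weighted hybrid Laplacian 𝓛 = (D_{w_l} − A_{w_l}) + (D_{w_q} + A_{w_q}) and the partial-transposed weights w_l^Γ, w_q^Γ by w^Γ((i,j),(k,l)) = w((i,l),(k,j)). If D_{w_l} + D_{w_q} = D_{w_l^Γ} + D_{w_q^Γ}, then the partial transpose 𝓛^Γ equals (D_{w_l^Γ} − A_{w_l^Γ}) + (D_{w_q^Γ} + A_{w_q^Γ}) and is positive semidefinite. (This covers unweighted and weighted L-graphs, Q-graphs, and hybrid graphs as special cases.) -/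
open Matrix

/-- Partial transpose of a weight function on the grid:
`w^Γ((i,j),(k,l)) = w((i,l),(k,j))`. -/
def ptW {m n : ℕ} (w : Fin m × Fin n → Fin m × Fin n → ℝ) :
    Fin m × Fin n → Fin m × Fin n → ℝ :=
  fun p q => w (p.1, q.2) (q.1, p.2)

theorem psd_aux {V : Type*} [Fintype V] [DecidableEq V] (w : V → V → ℝ)
    (hs : ∀ u v, w u v = w v u) (hn : ∀ u v, 0 ≤ w u v) (s : ℝ) (h1 : s ^ 2 = 1) :
    (degW w + s • adjW w).PosSemidef := by
  refine Matrix.PosSemidef.of_dotProduct_mulVec_nonneg ?_ ?_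
  · ext u v
    by_cases h : u = v
    · subst h; simp [degW, adjW]
    · have h' : v ≠ u := fun e => h e.symm
      simp [degW, adjW, h, h', hs u v]
  · intro x
    have e1 : star x ⬝ᵥ (degW w + s • adjW w) *ᵥ x
        = ∑ u, ∑ v, (w u v * x u ^ 2 + s * (w u v * x u * x v)) := by
      rw [Matrix.add_mulVec, dotProduct_add]
      simp only [Finset.sum_add_distrib]
      congr 1
      · simp only [degW, dotProduct, Matrix.mulVec_diagonal, star_trivial]
        refine Finset.sum_congr rfl fun u _ => ?_
        rw [Finset.sum_mul, Finset.mul_sum]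
        exact Finset.sum_congr rfl fun v _ => by ring
      · simp only [adjW, dotProduct, Matrix.mulVec, star_trivial, Matrix.smul_apply,
          Matrix.of_apply, smul_eq_mul]
        refine Finset.sum_congr rfl fun u _ => ?_
        rw [Finset.mul_sum]
        exact Finset.sum_congr rfl fun v _ => by ring
    have e2 : ∑ u, ∑ v, (w u v * x u ^ 2 + s * (w u v * x u * x v))
        = ∑ u, ∑ v, (w u v * x v ^ 2 + s * (w u v * x u * x v)) := by
      rw [Finset.sum_comm]
      refine Finset.sum_congr rfl fun u _ => Finset.sum_congr rfl fun v _ => ?_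
      rw [hs v u]; ring
    have e3 : 0 ≤ ∑ u, ∑ v, w u v * (x u + s * x v) ^ 2 :=
      Finset.sum_nonneg fun u _ => Finset.sum_nonneg fun v _ =>
        mul_nonneg (hn u v) (sq_nonneg _)
    have e4 : ∑ u, ∑ v, w u v * (x u + s * x v) ^ 2
        = ∑ u, ∑ v, (w u v * x u ^ 2 + s * (w u v * x u * x v))
        + ∑ u, ∑ v, (w u v * x v ^ 2 + s * (w u v * x u * x v)) := by
      simp only [← Finset.sum_add_distrib]
      refine Finset.sum_congr rfl fun u _ => Finset.sum_congr rfl fun v _ => ?_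
      linear_combination w u v * x v ^ 2 * h1
    rw [e1]
    linarith

theorem pt_degW {m n : ℕ} (w : Fin m × Fin n → Fin m × Fin n → ℝ) :
    pt (degW w) = degW w := by
  ext ⟨i, j⟩ ⟨k, l⟩
  by_cases h : i = k
  · by_cases h' : j = l
    · subst h; subst h'; rfl
    · have h'' : l ≠ j := fun e => h' e.symm
      simp [pt, degW, Matrix.diagonal_apply, h', h'']
  · simp [pt, degW, Matrix.diagonal_apply, h]

/-- Sufficiency of the degree criterion: if the degree matrix of a weighted hybrid graph
equals the degree matrix of its partial transpose, then the partial transpose of the hybrid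
Laplacian equals the hybrid Laplacian of the partial-transposed weights, and it is positive
semidefinite. -/
theorem degree_criterion_sufficient (m n : ℕ)
    (wl wq : Fin m × Fin n → Fin m × Fin n → ℝ)
    (hwl_symm : ∀ u v, wl u v = wl v u) (hwl_nonneg : ∀ u v, 0 ≤ wl u v)
    (hwl_diag : ∀ v, wl v v = 0)
    (hwq_symm : ∀ u v, wq u v = wq v u) (hwq_nonneg : ∀ u v, 0 ≤ wq u v)
    (hwq_diag : ∀ v, wq v v = 0)
    (hdisj : ∀ u v, ¬ (wl u v ≠ 0 ∧ wq u v ≠ 0))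
    (hdeg : degW wl + degW wq = degW (ptW wl) + degW (ptW wq)) :
    pt ((degW wl - adjW wl) + (degW wq + adjW wq)) =
      (degW (ptW wl) - adjW (ptW wl)) + (degW (ptW wq) + adjW (ptW wq)) ∧
    (pt ((degW wl - adjW wl) + (degW wq + adjW wq))).PosSemidef := by
  have key : pt ((degW wl - adjW wl) + (degW wq + adjW wq)) =
      (degW (ptW wl) - adjW (ptW wl)) + (degW (ptW wq) + adjW (ptW wq)) := by
    have a : pt ((degW wl - adjW wl) + (degW wq + adjW wq)) =
        (pt (degW wl) - adjW (ptW wl)) + (pt (degW wq) + adjW (ptW wq)) := rfl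
    rw [a, pt_degW, pt_degW]
    have b := eq_sub_of_add_eq hdeg
    rw [b]
    abel
  refine ⟨key, ?_⟩
  rw [key]
  have p1 := psd_aux (ptW wl) (fun u v => hwl_symm _ _) (fun u v => hwl_nonneg _ _) (-1) (by norm_num)
  have p2 := psd_aux (ptW wq) (fun u v => hwq_symm _ _) (fun u v => hwq_nonneg _ _) 1 (by norm_num)
  rw [neg_one_smul, ← sub_eq_add_neg] at p1
  rw [one_smul] at p2
  exact p1.add p2
end
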